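/- Let Q be a tidy query and C = H ← B a tidy clause that is variable disjoint from Q. Then every SLD-resolvent of Q and C (with respect to any selected atom of Q) is a tidy query. -/

import Mathlib

/-- Finite first-order terms: variables and function applications.
A function symbol is identified by its name together with the number of
arguments it is applied to (fixed arity). -/
inductive Trm : Type where
  | var : ℕ → Trm
  | fn  : ℕ → List Trm → Trm

namespace Trm

/-- `|t|`: the number of occurrences of variables and function symbols
(including constants) in the term `t`. -/
def size : Trm → ℕ
  | .var _ => 1
  | .fn _ ts => 1 + (ts.attach.map (fun ⟨t, _⟩ => size t)).sum
decreasing_by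
  have := List.sizeOf_lt_of_mem ‹_ ∈ ts›
  simp [Trm.fn.sizeOf_spec]; omega

/-- Application of a substitution (a map from variables to terms) to a term. -/
def subst (σ : ℕ → Trm) : Trm → Trm
  | .var x => σ x
  | .fn f ts => .fn f (ts.attach.map (fun ⟨t, _⟩ => subst σ t))
decreasing_by
  have := List.sizeOf_lt_of_mem ‹_ ∈ ts›
  simp [Trm.fn.sizeOf_spec]; omega

/-- The number of occurrences of the variable `x` in a term. -/
def count (x : ℕ) : Trm → ℕ
  | .var y => if y = x then 1 else 0
  | .fn _ ts => (ts.attach.map (fun ⟨t, _⟩ => count x t)).sum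
decreasing_by
  have := List.sizeOf_lt_of_mem ‹_ ∈ ts›
  simp [Trm.fn.sizeOf_spec]; omega

/-- `Occurs x t` : the variable `x` occurs in the term `t`. -/
inductive Occurs (x : ℕ) : Trm → Prop where
  | var : Occurs x (.var x)
  | fn {f : ℕ} {ts : List Trm} {t : Trm} : t ∈ ts → Occurs x t → Occurs x (.fn f ts)

end Trm

/-- The set of variables occurring in a term. -/
def varSet (t : Trm) : Set ℕ := {x | Trm.Occurs x t}

/-- The set of variables occurring in a list (tuple) of terms. -/
def varsL (l : List Trm) : Set ℕ := {x | ∃ t ∈ l, Trm.Occurs x t}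

/-- The number of occurrences of a variable in a list (tuple) of terms. -/
def countL (x : ℕ) (l : List Trm) : ℕ := (l.map (Trm.count x)).sum

/-- A term is ground if no variable occurs in it. -/
def Ground (t : Trm) : Prop := ∀ x, ¬ Trm.Occurs x t

/-- An equation set: a set of equations `s ≐ t` between terms,
represented as pairs of terms. -/
abbrev EqSet := Set (Trm × Trm)

/-- `σ` is a solution (unifier) of the equation set `E`. -/
def Solves (σ : ℕ → Trm) (E : EqSet) : Prop :=
  ∀ e ∈ E, Trm.subst σ e.1 = Trm.subst σ e.2

/-- `E` is unifiable: it has a unifier. -/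
def Unifiable (E : EqSet) : Prop := ∃ σ, Solves σ E

/-- `θ` is a most general unifier of `E`. -/
def IsMgu (θ : ℕ → Trm) (E : EqSet) : Prop :=
  Solves θ E ∧ ∀ σ, Solves σ E → ∃ ρ, ∀ x, σ x = Trm.subst ρ (θ x)

/-- The equation set `s ≐̈ t` pairing corresponding members of two
equal-length tuples of terms. -/
def zipEqs (s t : List Trm) : EqSet := {e | e ∈ s.zip t}

/-- A moded atom `p(s; t)`: a predicate symbol `p` together with the tuple
`s` of terms filling its input positions and the tuple `t` of terms filling
its output positions. -/
structure Atom where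
  pred : ℕ
  inp : List Trm
  out : List Trm

/-- The variables of an atom. -/
def Atom.vars (A : Atom) : Set ℕ := varsL (A.inp ++ A.out)

/-- A query: a finite sequence of moded atoms. -/
abbrev Query := List Atom

/-- The variables of a query. -/
def queryVars (Q : Query) : Set ℕ := {x | ∃ A ∈ Q, x ∈ A.vars}

/-- A query is output linear: the combined tuple of all terms filling output
positions of its atoms is linear. -/
def OutputLinear (Q : Query) : Prop :=
  ∀ x, (Q.map (fun A => countL x A.out)).sum ≤ 1

/-- An atom is input linear: the tuple of terms filling its input positions
is linear. -/
def InputLinear (A : Atom) : Prop := ∀ x, countL x A.inp ≤ 1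

/-- `Ai →_Q Aj` : some variable occurs both in an output position of `Ai`
and in an input position of `Aj` (a relation on the atom positions of `Q`). -/
def qrel (Q : Query) (i j : Fin Q.length) : Prop :=
  ∃ x, x ∈ varsL (Q.get i).out ∧ x ∈ varsL (Q.get j).inp

/-- A query `Q` is tidy: it is output linear and `→_Q` is acyclic
(no `Ai →_Q⁺ Ai`). -/
def TidyQ (Q : Query) : Prop :=
  OutputLinear Q ∧ ∀ i, ¬ Relation.TransGen (qrel Q) i i

/-- A clause `H ← B`: a head atom and a body query. -/
structure Clause where
  head : Atom
  body : Query

/-- The variables of a clause. -/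
def clauseVars (C : Clause) : Set ℕ := C.head.vars ∪ queryVars C.body

/-- A clause `H ← Q` is tidy: `Q` is tidy, `H` is input linear, and no
variable occurring in an input position of `H` occurs in an output position
of `Q`. -/
def TidyC (C : Clause) : Prop :=
  TidyQ C.body ∧ InputLinear C.head ∧
    ∀ x ∈ varsL C.head.inp, ∀ A ∈ C.body, x ∉ varsL A.out

/-- Application of a substitution to a moded atom. -/
def Atom.subst (σ : ℕ → Trm) (A : Atom) : Atom :=
  ⟨A.pred, A.inp.map (Trm.subst σ), A.out.map (Trm.subst σ)⟩

/-- Application of a substitution to a query. -/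
def Query.subst (σ : ℕ → Trm) (Q : Query) : Query := Q.map (Atom.subst σ)

/-- The equation set pairing the corresponding argument terms of two atoms
(with the same predicate symbol). -/
def atomEqs (A H : Atom) : EqSet :=
  zipEqs (A.inp ++ A.out) (H.inp ++ H.out)

/-- The SLD-resolvent of the query `Q`, with selected atom at position `i`,
and the clause `C`, via the mgu `θ`:
`(A1,…,Ai−1, B, Ai+1,…,An)θ`. -/
def Resolvent (Q : Query) (i : ℕ) (C : Clause) (θ : ℕ → Trm) : Query :=
  Query.subst θ (Q.take i ++ C.body ++ Q.drop (i + 1))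

/-!
The pair `A.inp ≐ H.inp`, `H.out ≐ A.out` of equation tuples can be read as moded atoms `=(s; t)`
placed in front of the unresolved part of the resolvent, and the resulting query is again tidy.
Tidiness survives every step of Martelli–Montanari unification performed on such equation atoms:
acyclicity makes the occurs check succeed, and output linearity controls the outputs created when a
variable is bound. Hence some mgu, the composition of the bindings, yields a tidy instance. Any
other mgu `θ` differs from it by a renaming `ρ` with `τ = θρ`, and tidiness passes from `Rθρ` back
to `Rθ` because `ρ` maps no variable of `Rθ` to a ground term.
-/

/-! ### Terms and tuples of terms -/

namespace Trm

@[elab_as_elim, induction_eliminator]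
theorem induction {P : Trm → Prop} (var : ∀ x, P (.var x))
    (fn : ∀ f ts, (∀ t ∈ ts, P t) → P (.fn f ts)) : ∀ t, P t
  | .var x => var x
  | .fn f ts => fn f ts fun t _ => induction var fn t
decreasing_by
  have := List.sizeOf_lt_of_mem ‹_ ∈ ts›
  simp only [Trm.fn.sizeOf_spec]
  omega

@[simp]
theorem size_fn (f : ℕ) (ts : List Trm) : size (.fn f ts) = 1 + (ts.map size).sum := by
  rw [size]
  simp

theorem size_pos (t : Trm) : 0 < size t := by
  cases t <;> rw [size] <;> omega

@[simp]
theorem subst_var (σ : ℕ → Trm) (x : ℕ) : subst σ (.var x) = σ x := by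
  rw [subst]

@[simp]
theorem subst_fn (σ : ℕ → Trm) (f : ℕ) (ts : List Trm) :
    subst σ (.fn f ts) = .fn f (ts.map (subst σ)) := by
  rw [subst]
  simp

@[simp]
theorem count_var (x y : ℕ) : count x (.var y) = if y = x then 1 else 0 := by
  rw [count]

@[simp]
theorem count_fn (x f : ℕ) (ts : List Trm) : count x (.fn f ts) = countL x ts := by
  rw [count]
  simp [countL]

@[simp]
theorem occurs_var {x y : ℕ} : Occurs x (.var y) ↔ y = x :=
  ⟨fun h => by cases h; rfl, fun h => h ▸ .var⟩

theorem mem_varsL {x : ℕ} {l : List Trm} : x ∈ varsL l ↔ ∃ t ∈ l, Occurs x t := Iff.rfl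

@[simp]
theorem occurs_fn {x f : ℕ} {ts : List Trm} : Occurs x (.fn f ts) ↔ x ∈ varsL ts :=
  ⟨fun h => by cases h with | fn ht hx => exact ⟨_, ht, hx⟩, fun ⟨_, ht, hx⟩ => .fn ht hx⟩

theorem count_pos_iff {x : ℕ} {t : Trm} : 0 < count x t ↔ Occurs x t := by
  induction t with
  | var y => simp [Nat.pos_iff_ne_zero]
  | fn f ts ih =>
    simpa [countL, mem_varsL, List.sum_pos_iff_exists_pos_nat]
      using exists_congr fun t => and_congr_right (ih t)

theorem occurs_subst {σ : ℕ → Trm} {y : ℕ} {u : Trm} :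
    Occurs y (subst σ u) ↔ ∃ x, Occurs x u ∧ Occurs y (σ x) := by
  induction u with
  | var x => simp
  | fn f ts ih =>
    simp only [subst_fn, occurs_fn, mem_varsL, List.mem_map]
    constructor
    · rintro ⟨_, ⟨t, ht, rfl⟩, hy⟩
      obtain ⟨x, hx, hxy⟩ := (ih t ht).1 hy
      exact ⟨x, ⟨t, ht, hx⟩, hxy⟩
    · rintro ⟨x, ⟨t, ht, hx⟩, hxy⟩
      exact ⟨_, ⟨t, ht, rfl⟩, (ih t ht).2 ⟨x, hx, hxy⟩⟩

theorem subst_eq_self_iff {σ : ℕ → Trm} {u : Trm} :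
    subst σ u = u ↔ ∀ x, Occurs x u → σ x = .var x := by
  induction u with
  | var x => simp
  | fn f ts ih =>
    have hts : ts.map (subst σ) = ts ↔ ∀ t ∈ ts, subst σ t = t := by
      conv_lhs => rhs; rw [← List.map_id ts]
      exact List.map_inj_left
    simp only [subst_fn, fn.injEq, true_and, hts, occurs_fn]
    exact ⟨fun h x ⟨t, ht, hx⟩ => (ih t ht).1 (h t ht) x hx,
      fun h t ht => (ih t ht).2 fun x hx => h x ⟨t, ht, hx⟩⟩

/-- The composition of substitutions, `τ` acting first. -/
def comp (σ τ : ℕ → Trm) : ℕ → Trm := fun x => subst σ (τ x)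

theorem subst_comp (σ τ : ℕ → Trm) (u : Trm) : subst (comp σ τ) u = subst σ (subst τ u) := by
  induction u with
  | var x => simp [comp]
  | fn f ts ih => simpa using ih

theorem comp_assoc (σ τ ρ : ℕ → Trm) : comp (comp σ τ) ρ = comp σ (comp τ ρ) :=
  funext fun x => subst_comp σ τ (ρ x)

theorem comp_var (σ : ℕ → Trm) : comp σ var = σ :=
  funext (subst_var σ)

/-- The substitution `{X / t}`, which binds `X` to `t` and fixes every other variable. -/
def single (X : ℕ) (t : Trm) : ℕ → Trm := Function.update var X t

@[simp]
theorem single_self (X : ℕ) (t : Trm) : single X t X = t := by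
  simp [single]

theorem single_of_ne {X x : ℕ} (h : x ≠ X) (t : Trm) : single X t x = .var x := by
  simp [single, h]

theorem occurs_single {X x y : ℕ} {t : Trm} :
    Occurs y (single X t x) ↔ x = X ∧ Occurs y t ∨ x ≠ X ∧ x = y := by
  obtain rfl | hx := eq_or_ne x X
  · simp
  · simp [single_of_ne hx, hx]

theorem subst_single_of_not_occurs {X : ℕ} {t u : Trm} (h : ¬ Occurs X u) :
    subst (single X t) u = u :=
  subst_eq_self_iff.2 fun x hx => single_of_ne (x := x) (by rintro rfl; exact h hx) t

theorem comp_single {σ : ℕ → Trm} {X : ℕ} {t : Trm} (h : σ X = subst σ t) :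
    comp σ (single X t) = σ := by
  funext x
  obtain rfl | hx := eq_or_ne x X
  · simp [comp, h]
  · simp [comp, single_of_ne hx]

theorem count_le_count_subst {σ : ℕ → Trm} {x y : ℕ} (h : Occurs y (σ x)) (u : Trm) :
    count x u ≤ count y (subst σ u) := by
  induction u with
  | var z =>
    obtain rfl | hz := eq_or_ne z x
    · simpa using Nat.succ_le_of_lt (count_pos_iff.2 h)
    · simp [hz]
  | fn f ts ih =>
    simp only [subst_fn, count_fn, countL, List.map_map]
    exact List.sum_le_sum ih

theorem count_subst_single_le (X y : ℕ) (t u : Trm) :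
    count y (subst (single X t) u) ≤ count y u + count X u * count y t := by
  induction u with
  | var z =>
    obtain rfl | hz := eq_or_ne z X
    · simp
    · simp [single_of_ne hz, hz]
  | fn f ts ih =>
    simp only [subst_fn, count_fn, countL, List.map_map, ← List.sum_map_mul_right,
      ← List.sum_map_add]
    exact List.sum_le_sum ih

end Trm

open Trm

@[simp]
theorem varsL_append (l l' : List Trm) : varsL (l ++ l') = varsL l ∪ varsL l' := by
  ext x
  simp [varsL, or_and_right, exists_or]

theorem mem_varsL_map_subst {σ : ℕ → Trm} {y : ℕ} {l : List Trm} :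
    y ∈ varsL (l.map (subst σ)) ↔ ∃ x ∈ varsL l, Occurs y (σ x) := by
  simpa using occurs_subst (σ := σ) (y := y) (u := .fn 0 l)

@[simp]
theorem countL_cons (x : ℕ) (t : Trm) (l : List Trm) :
    countL x (t :: l) = count x t + countL x l := by
  simp [countL]

@[simp]
theorem countL_append (x : ℕ) (l l' : List Trm) :
    countL x (l ++ l') = countL x l + countL x l' := by
  simp [countL]

theorem countL_pos_iff {x : ℕ} {l : List Trm} : 0 < countL x l ↔ x ∈ varsL l := by
  simpa using count_pos_iff (x := x) (t := .fn 0 l)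

theorem countL_eq_zero_iff {x : ℕ} {l : List Trm} : countL x l = 0 ↔ x ∉ varsL l := by
  rw [← countL_pos_iff, Nat.pos_iff_ne_zero, not_not]

theorem countL_le_countL_map_subst {σ : ℕ → Trm} {x y : ℕ} (h : Occurs y (σ x)) (l : List Trm) :
    countL x l ≤ countL y (l.map (subst σ)) := by
  simpa using count_le_count_subst h (.fn 0 l)

theorem countL_map_subst_single_le (X y : ℕ) (t : Trm) (l : List Trm) :
    countL y (l.map (subst (single X t))) ≤ countL y l + countL X l * count y t := by
  simpa using count_subst_single_le X y t (.fn 0 l)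

/-- A tuple of terms is linear if no variable has more than one occurrence in it. -/
def LinearTuple (l : List Trm) : Prop := ∀ x, countL x l ≤ 1

theorem LinearTuple.append {l l' : List Trm} (h : LinearTuple l) (h' : LinearTuple l')
    (hd : Disjoint (varsL l) (varsL l')) : LinearTuple (l ++ l') := by
  intro x
  rw [countL_append]
  by_cases hx : x ∈ varsL l
  · simpa [countL_eq_zero_iff.2 (Set.disjoint_left.1 hd hx)] using h x
  · simpa [countL_eq_zero_iff.2 hx] using h' x

/-! ### Queries and rankings -/

theorem Atom.inp_subset_vars (A : Atom) : varsL A.inp ⊆ A.vars := by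
  simp [Atom.vars]

theorem Atom.out_subset_vars (A : Atom) : varsL A.out ⊆ A.vars := by
  simp [Atom.vars]

theorem vars_subset_queryVars {Q : Query} {A : Atom} (h : A ∈ Q) : A.vars ⊆ queryVars Q :=
  fun _ hx => ⟨A, h, hx⟩

theorem mem_queryVars {x : ℕ} {Q : Query} : x ∈ queryVars Q ↔ ∃ A ∈ Q, x ∈ A.vars := Iff.rfl

theorem mem_queryVars_subst {σ : ℕ → Trm} {y : ℕ} {Q : Query} :
    y ∈ queryVars (Query.subst σ Q) ↔ ∃ x ∈ queryVars Q, Occurs y (σ x) := by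
  have hatom (A : Atom) : y ∈ (A.subst σ).vars ↔ ∃ x ∈ A.vars, Occurs y (σ x) := by
    rw [Atom.vars, Atom.subst, ← List.map_append, mem_varsL_map_subst, Atom.vars]
  simp only [mem_queryVars, Query.subst, List.mem_map, exists_exists_and_eq_and, hatom]
  exact ⟨fun ⟨A, hA, x, hx, hy⟩ => ⟨x, ⟨A, hA, hx⟩, hy⟩,
    fun ⟨x, ⟨A, hA, hx⟩, hy⟩ => ⟨A, hA, x, hx, hy⟩⟩

namespace Query

theorem subst_comp (σ τ : ℕ → Trm) (Q : Query) :
    subst (comp σ τ) Q = subst σ (subst τ Q) := by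
  simp [subst, Atom.subst, Trm.subst_comp, Function.comp_def]

theorem subst_var (Q : Query) : subst var Q = Q := by
  have hid : Trm.subst var = id := funext fun u => subst_eq_self_iff.2 fun _ _ => rfl
  have hatom : Atom.subst var = id := funext fun A => by simp [Atom.subst, hid]
  simp [subst, hatom]

/-- The combined tuple of all terms filling output positions of the atoms of a query. -/
def outs (Q : Query) : List Trm := Q.flatMap Atom.out

@[simp]
theorem outs_cons (A : Atom) (Q : Query) : outs (A :: Q) = A.out ++ outs Q := rfl

@[simp]
theorem outs_append (Q Q' : Query) : outs (Q ++ Q') = outs Q ++ outs Q' := by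
  simp [outs]

theorem outs_subst (σ : ℕ → Trm) (Q : Query) :
    outs (subst σ Q) = (outs Q).map (Trm.subst σ) := by
  simp [outs, subst, Atom.subst, List.flatMap_map, List.map_flatMap]

theorem mem_varsL_outs {x : ℕ} {Q : Query} :
    x ∈ varsL (outs Q) ↔ ∃ A ∈ Q, x ∈ varsL A.out := by
  simp only [mem_varsL, outs, List.mem_flatMap]
  exact ⟨fun ⟨t, ⟨A, hA, ht⟩, hx⟩ => ⟨A, hA, t, ht, hx⟩,
    fun ⟨A, hA, t, ht, hx⟩ => ⟨t, ⟨A, hA, ht⟩, hx⟩⟩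

theorem varsL_outs_subset_queryVars (Q : Query) : varsL (outs Q) ⊆ queryVars Q := by
  intro x hx
  obtain ⟨A, hA, hxA⟩ := mem_varsL_outs.1 hx
  exact ⟨A, hA, A.out_subset_vars hxA⟩

end Query

open Query hiding subst subst_comp subst_var

theorem outputLinear_iff {Q : Query} : OutputLinear Q ↔ LinearTuple (outs Q) := by
  have hcount (x : ℕ) : countL x (outs Q) = (Q.map fun A => countL x A.out).sum := by
    induction Q with
    | nil => rfl
    | cons A Q ih => simp [ih]
  simp only [OutputLinear, LinearTuple, hcount]

/-- A ranking of a query assigns to its variables elements of an order such that, in every atom,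
each input variable is strictly below each output variable. Existence of a ranking characterises
acyclicity of `→_Q`. -/
def IsRanking {α : Type*} [Preorder α] (r : ℕ → α) (Q : Query) : Prop :=
  ∀ A ∈ Q, ∀ x ∈ varsL A.inp, ∀ y ∈ varsL A.out, r x < r y

section Ranking

variable {α : Type*} [Preorder α] {r : ℕ → α} {Q Q' : Query}

theorem isRanking_cons {A : Atom} :
    IsRanking r (A :: Q) ↔ (∀ x ∈ varsL A.inp, ∀ y ∈ varsL A.out, r x < r y) ∧ IsRanking r Q :=
  List.forall_mem_cons

theorem isRanking_append : IsRanking r (Q ++ Q') ↔ IsRanking r Q ∧ IsRanking r Q' :=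
  List.forall_mem_append

theorem IsRanking.subst {r' : ℕ → α} {σ : ℕ → Trm} (h : IsRanking r Q)
    (hinp : ∀ x z, Occurs z (σ x) → r' z ≤ r x)
    (hout : ∀ y ∈ varsL (outs Q), ∀ z, Occurs z (σ y) → r y ≤ r' z) :
    IsRanking r' (Query.subst σ Q) := by
  refine List.forall_mem_map.2 fun A hA z hz w hw => ?_
  obtain ⟨x, hx, hxz⟩ := mem_varsL_map_subst.1 hz
  obtain ⟨y, hy, hyw⟩ := mem_varsL_map_subst.1 hw
  calc r' z ≤ r x := hinp x z hxz
    _ < r y := h A hA x hx y hy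
    _ ≤ r' w := hout y (mem_varsL_outs.2 ⟨A, hA, hy⟩) w hyw

theorem IsRanking.exists_le_of_transGen (h : IsRanking r Q) {i j : Fin Q.length}
    (hij : Relation.TransGen (qrel Q) i j) :
    ∃ y ∈ varsL (Q.get i).out, ∃ x ∈ varsL (Q.get j).inp, r y ≤ r x := by
  induction hij with
  | single hij =>
    obtain ⟨x, hxi, hxj⟩ := hij
    exact ⟨x, hxi, x, hxj, le_rfl⟩
  | tail _ hjk ih =>
    obtain ⟨y, hy, x, hx, hyx⟩ := ih
    obtain ⟨z, hzj, hzk⟩ := hjk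
    exact ⟨y, hy, z, hzk, hyx.trans (h _ (List.get_mem _ _) x hx z hzj).le⟩

theorem TidyQ.of_isRanking (hlin : LinearTuple (outs Q)) (h : IsRanking r Q) : TidyQ Q := by
  refine ⟨outputLinear_iff.2 hlin, fun i hi => ?_⟩
  obtain ⟨y, hy, x, hx, hyx⟩ := h.exists_le_of_transGen hi
  exact (h _ (List.get_mem _ _) x hx y hy).not_ge hyx

end Ranking

theorem exists_rank_of_acyclic {ι : Type*} [Finite ι] {R : ι → ι → Prop}
    (h : ∀ i, ¬ Relation.TransGen R i i) : ∃ f : ι → ℕ, ∀ i j, R i j → f i < f j :=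
  ⟨fun i => {k | Relation.TransGen R k i}.ncard, fun i _ hij =>
    Set.ncard_lt_ncard ⟨fun _ hk => hk.tail hij, fun hsub => h i (hsub (.single hij))⟩
      (Set.toFinite _)⟩

namespace TidyQ

variable {Q : Query}

theorem linearTuple_outs (h : TidyQ Q) : LinearTuple (outs Q) :=
  outputLinear_iff.1 h.1

theorem exists_separating_ranking (h : TidyQ Q) :
    ∃ r : ℕ → ℕ, ∀ A ∈ Q, ∃ m, (∀ x ∈ varsL A.inp, r x ≤ m) ∧ ∀ y ∈ varsL A.out, m < r y := by
  classical
  obtain ⟨f, hf⟩ := exists_rank_of_acyclic h.2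
  let producers (x : ℕ) : Finset (Fin Q.length) := {i | x ∈ varsL (Q.get i).out}
  refine ⟨fun x => (producers x).sup fun i => f i + 1, fun A hA => ?_⟩
  obtain ⟨j, rfl⟩ := List.mem_iff_get.1 hA
  refine ⟨f j, fun x hx => Finset.sup_le fun i hi => ?_, fun y hy => ?_⟩
  · exact hf i j ⟨x, by simpa [producers] using hi, hx⟩
  · exact Finset.le_sup (f := fun i => f i + 1) (by simpa [producers] using hy)

theorem exists_isRanking (h : TidyQ Q) : ∃ r : ℕ → ℕ, IsRanking r Q := by
  obtain ⟨r, hr⟩ := h.exists_separating_ranking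
  refine ⟨r, fun A hA x hx y hy => ?_⟩
  obtain ⟨m, hinp, hout⟩ := hr A hA
  exact (hinp x hx).trans_lt (hout y hy)

theorem of_subst {σ : ℕ → Trm} (h : TidyQ (Query.subst σ Q))
    (hσ : ∀ x ∈ queryVars Q, ∃ z, Occurs z (σ x)) : TidyQ Q := by
  obtain ⟨r, hr⟩ := h.exists_isRanking
  choose! z hz using hσ
  have hzmem {l : List Trm} {x : ℕ} (hx : x ∈ varsL l) (hxQ : x ∈ queryVars Q) :
      z x ∈ varsL (l.map (subst σ)) := mem_varsL_map_subst.2 ⟨x, hx, hz x hxQ⟩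
  refine .of_isRanking (r := r ∘ z) (fun x => ?_) fun A hA x hx y hy => ?_
  · by_cases hx : x ∈ varsL (outs Q)
    · have hlin := h.linearTuple_outs (z x)
      rw [outs_subst] at hlin
      exact (countL_le_countL_map_subst (hz x (varsL_outs_subset_queryVars Q hx)) _).trans hlin
    · simp [countL_eq_zero_iff.2 hx]
  · exact hr _ (List.mem_map_of_mem hA)
      _ (hzmem hx (vars_subset_queryVars hA (A.inp_subset_vars hx)))
      _ (hzmem hy (vars_subset_queryVars hA (A.out_subset_vars hy)))

theorem not_mem_out_of_mem_inp {A : Atom} {x : ℕ} (h : TidyQ Q) (hA : A ∈ Q)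
    (hx : x ∈ varsL A.inp) : x ∉ varsL A.out := by
  obtain ⟨r, hr⟩ := h.exists_isRanking
  exact fun hx' => lt_irrefl _ (hr A hA x hx x hx')

end TidyQ

/-! ### Equations as moded atoms -/

/-- A sequence of equations `s ≐ t` read as the query of moded atoms `=(s; t)`; the predicate
symbol `0` is arbitrary. -/
def eqQuery (E : List (Trm × Trm)) : Query := E.map fun e => ⟨0, [e.1], [e.2]⟩

@[simp]
theorem eqQuery_cons (e : Trm × Trm) (E : List (Trm × Trm)) :
    eqQuery (e :: E) = ⟨0, [e.1], [e.2]⟩ :: eqQuery E := rfl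

@[simp]
theorem eqQuery_append (E E' : List (Trm × Trm)) :
    eqQuery (E ++ E') = eqQuery E ++ eqQuery E' :=
  List.map_append

theorem outs_eqQuery (E : List (Trm × Trm)) : outs (eqQuery E) = E.map Prod.snd := by
  rw [outs, eqQuery, List.flatMap_map, List.map_eq_flatMap]

theorem subst_eqQuery_append (σ : ℕ → Trm) (E : List (Trm × Trm)) (Q : Query) :
    Query.subst σ (eqQuery E ++ Q) =
      eqQuery (E.map (Prod.map (Trm.subst σ) (Trm.subst σ))) ++ Query.subst σ Q := by
  simp [Query.subst, eqQuery, Atom.subst]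

theorem outs_eqQuery_zip {ss ts : List Trm} (h : ss.length = ts.length) :
    outs (eqQuery (ss.zip ts)) = ts := by
  rw [outs_eqQuery, List.map_snd_zip h.ge]

theorem isRanking_eqQuery_zip {α : Type*} [Preorder α] {r : ℕ → α} {ss ts : List Trm}
    (h : ∀ x ∈ varsL ss, ∀ y ∈ varsL ts, r x < r y) : IsRanking r (eqQuery (ss.zip ts)) := by
  refine List.forall_mem_map.2 fun e he x hx y hy => ?_
  obtain ⟨hs, ht⟩ := List.of_mem_zip he
  obtain ⟨_, hxs, hx⟩ := hx
  obtain ⟨_, hyt, hy⟩ := hy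
  rw [List.mem_singleton] at hxs hyt
  subst hxs hyt
  exact h x ⟨_, hs, hx⟩ y ⟨_, ht, hy⟩

namespace TidyQ

variable {p X f g : ℕ} {t : Trm} {ss ts : List Trm} {Q : Query}

theorem decompose (h : TidyQ (⟨p, [.fn f ss], [.fn g ts]⟩ :: Q)) (hlen : ss.length = ts.length) :
    TidyQ (eqQuery (ss.zip ts) ++ Q) := by
  obtain ⟨r, hr⟩ := h.exists_isRanking
  obtain ⟨hhead, htail⟩ := isRanking_cons.1 hr
  refine .of_isRanking (r := r) ?_ (isRanking_append.2 ⟨isRanking_eqQuery_zip ?_, htail⟩)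
  · simpa [LinearTuple, outs_eqQuery_zip hlen] using h.linearTuple_outs
  · simpa [varSet, varsL] using hhead

theorem bind_inp (h : TidyQ (⟨p, [.var X], [t]⟩ :: Q)) : TidyQ (Query.subst (single X t) Q) := by
  classical
  obtain ⟨r, hr⟩ := h.exists_isRanking
  obtain ⟨hhead, htail⟩ := isRanking_cons.1 hr
  have hXt : ∀ y, Occurs y t → r X < r y := by simpa [varsL] using hhead
  have hlin (y : ℕ) : count y t + countL y (outs Q) ≤ 1 := by
    simpa [countL] using h.linearTuple_outs y
  -- Ranks of the variables of `t` drop to that of `X`, whose input occurrences `t` takes over.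
  refine .of_isRanking (r := fun y => if Occurs y t then r X else r y) (fun y => ?_)
    (htail.subst (fun x z hz => ?_) fun y hy z hz => ?_)
  · have hX : countL X (outs Q) * count y t ≤ 1 * count y t :=
      Nat.mul_le_mul_right _ (le_of_add_le_right (hlin X))
    calc countL y (outs (Query.subst (single X t) Q))
        ≤ countL y (outs Q) + countL X (outs Q) * count y t := by
          rw [outs_subst]
          exact countL_map_subst_single_le X y t _
      _ ≤ 1 := by linarith [hlin y]
  · rcases occurs_single.1 hz with ⟨rfl, hzt⟩ | ⟨-, rfl⟩
    · simp [hzt]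
    · split_ifs with hx
      · exact (hXt x hx).le
      · exact le_rfl
  · rcases occurs_single.1 hz with ⟨rfl, hzt⟩ | ⟨-, rfl⟩
    · simp [hzt]
    · have hyt : ¬ Occurs y t := fun hyt => by
        have := count_pos_iff.2 hyt
        have := countL_pos_iff.2 hy
        have := hlin y
        omega
      simp [hyt]

theorem bind_out (h : TidyQ (⟨p, [t], [.var X]⟩ :: Q)) : TidyQ (Query.subst (single X t) Q) := by
  obtain ⟨r, hr⟩ := h.exists_isRanking
  obtain ⟨hhead, htail⟩ := isRanking_cons.1 hr
  have htX : ∀ y, Occurs y t → r y < r X := by simpa [varsL] using hhead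
  have hlin (y : ℕ) : (if X = y then 1 else 0) + countL y (outs Q) ≤ 1 := by
    simpa [countL] using h.linearTuple_outs y
  have hX : countL X (outs Q) = 0 := by simpa using hlin X
  refine .of_isRanking (r := r) (fun y => ?_)
    (htail.subst (fun x z hz => ?_) fun y hy z hz => ?_)
  · calc countL y (outs (Query.subst (single X t) Q))
        ≤ countL y (outs Q) + countL X (outs Q) * count y t := by
          rw [outs_subst]
          exact countL_map_subst_single_le X y t _
      _ = countL y (outs Q) := by simp [hX]
      _ ≤ 1 := le_of_add_le_right (hlin y)
  · rcases occurs_single.1 hz with ⟨rfl, hzt⟩ | ⟨-, rfl⟩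
    · exact (htX z hzt).le
    · exact le_rfl
  · rcases occurs_single.1 hz with ⟨rfl, -⟩ | ⟨-, rfl⟩
    · exact absurd hy (countL_eq_zero_iff.1 hX)
    · exact le_rfl

end TidyQ

/-! ### Tidy instances under most general unifiers -/

theorem solves_insert {σ : ℕ → Trm} {e : Trm × Trm} {E : EqSet} :
    Solves σ (insert e E) ↔ subst σ e.1 = subst σ e.2 ∧ Solves σ E :=
  Set.forall_mem_insert ..

theorem solves_union {σ : ℕ → Trm} {E E' : EqSet} :
    Solves σ (E ∪ E') ↔ Solves σ E ∧ Solves σ E' := by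
  simp only [Solves, Set.mem_union, or_imp, forall_and]

theorem solves_image_subst {σ τ : ℕ → Trm} {E : EqSet} :
    Solves σ (Prod.map (subst τ) (subst τ) '' E) ↔ Solves (comp σ τ) E := by
  simp only [Solves, Set.forall_mem_image, Prod.map_fst, Prod.map_snd, subst_comp]

theorem solves_zipEqs {σ : ℕ → Trm} {ss ts : List Trm} (h : ss.length = ts.length) :
    Solves σ (zipEqs ss ts) ↔ ss.map (subst σ) = ts.map (subst σ) := by
  induction ss generalizing ts with
  | nil => simp_all [Solves, zipEqs, eq_comm]
  | cons s ss ih =>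
    obtain ⟨t, ts, rfl⟩ := List.exists_cons_of_length_eq_add_one h.symm
    have hcons : zipEqs (s :: ss) (t :: ts) = insert (s, t) (zipEqs ss ts) := by
      ext; simp [zipEqs]
    rw [hcons, solves_insert, ih (by simpa using h), List.map_cons, List.map_cons, List.cons.injEq]

theorem solves_insert_fn {σ : ℕ → Trm} {f : ℕ} {ss ts : List Trm} {E : EqSet}
    (h : ss.length = ts.length) :
    Solves σ (insert (.fn f ss, .fn f ts) E) ↔ Solves σ (zipEqs ss ts ∪ E) := by
  simp [solves_insert, solves_union, solves_zipEqs h]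

/-- An idempotent mgu of `E`: a unifier `τ` through which every unifier `σ` factors as
`σ = στ`. -/
def IsIdempotentMgu (τ : ℕ → Trm) (E : EqSet) : Prop :=
  Solves τ E ∧ ∀ σ, Solves σ E → comp σ τ = σ

theorem isIdempotentMgu_empty : IsIdempotentMgu var ∅ :=
  ⟨by simp [Solves], fun σ _ => comp_var σ⟩

theorem IsIdempotentMgu.bind {X : ℕ} {t : Trm} {τ : ℕ → Trm} {E : EqSet} (hX : ¬ Occurs X t)
    (h : IsIdempotentMgu τ (Prod.map (subst (single X t)) (subst (single X t)) '' E)) :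
    IsIdempotentMgu (comp τ (single X t)) (insert (.var X, t) E) := by
  refine ⟨solves_insert.2 ⟨?_, solves_image_subst.1 h.1⟩, fun σ hσ => ?_⟩
  · rw [Trm.subst_comp, Trm.subst_comp, subst_single_of_not_occurs hX, Trm.subst_var, single_self]
  · obtain ⟨hXt, hσE⟩ := solves_insert.1 hσ
    have hσX : comp σ (single X t) = σ := comp_single (by simpa using hXt)
    have hστ : comp σ τ = σ := h.2 σ (solves_image_subst.2 (hσX.symm ▸ hσE))
    rw [← comp_assoc, hστ, hσX]

/-- Some idempotent mgu of `E` turns `Q` into a tidy query. -/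
def HasTidyInstance (E : EqSet) (Q : Query) : Prop :=
  ∃ τ, IsIdempotentMgu τ E ∧ TidyQ (Query.subst τ Q)

theorem HasTidyInstance.congr {E E' : EqSet} {Q : Query} (h : HasTidyInstance E Q)
    (hE : ∀ σ, Solves σ E ↔ Solves σ E') : HasTidyInstance E' Q := by
  simpa only [HasTidyInstance, IsIdempotentMgu, hE] using h

theorem HasTidyInstance.bind {X : ℕ} {t : Trm} {E : EqSet} {Q : Query} (hX : ¬ Occurs X t)
    (h : HasTidyInstance (Prod.map (subst (single X t)) (subst (single X t)) '' E)
      (Query.subst (single X t) Q)) :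
    HasTidyInstance (insert (.var X, t) E) Q := by
  obtain ⟨τ, hτ, htidy⟩ := h
  exact ⟨comp τ (single X t), hτ.bind hX, by rwa [Query.subst_comp]⟩

theorem HasTidyInstance.tidyQ_of_isMgu {θ : ℕ → Trm} {E : EqSet} {Q : Query}
    (h : HasTidyInstance E Q) (hθ : IsMgu θ E) : TidyQ (Query.subst θ Q) := by
  obtain ⟨τ, hτ, htidy⟩ := h
  obtain ⟨ρ, hρ⟩ := hθ.2 τ hτ.1
  have hτρ : τ = comp ρ θ := funext hρ
  rw [hτρ, Query.subst_comp] at htidy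
  refine htidy.of_subst fun x hx => ?_
  obtain ⟨w, -, hxw⟩ := mem_queryVars_subst.1 hx
  have hfix : subst (comp θ ρ) (θ w) = θ w := by
    rw [Trm.subst_comp, ← hρ]
    exact congrFun (hτ.2 θ hθ.1) w
  have hx_fix : subst θ (ρ x) = .var x := subst_eq_self_iff.1 hfix x hxw
  obtain ⟨z, hz, -⟩ := occurs_subst.1 (hx_fix ▸ .var : Occurs x (subst θ (ρ x)))
  exact ⟨z, hz⟩

/-- The total size of the left-hand sides of the equations `E` instantiated by `σ`. For a unifier
`σ` it decreases in each step of the unification algorithm. -/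
def instSize (σ : ℕ → Trm) (E : List (Trm × Trm)) : ℕ := (E.map fun e => size (subst σ e.1)).sum

theorem instSize_map_single {σ : ℕ → Trm} {X : ℕ} {t : Trm} (h : σ X = subst σ t)
    (E : List (Trm × Trm)) :
    instSize σ (E.map (Prod.map (subst (single X t)) (subst (single X t)))) = instSize σ E := by
  simp [instSize, Function.comp_def, ← Trm.subst_comp, comp_single h]

theorem instSize_zip_append {σ : ℕ → Trm} {ss ts : List Trm} (h : ss.length = ts.length)
    (E : List (Trm × Trm)) :
    instSize σ (ss.zip ts ++ E) = (ss.map fun s => size (subst σ s)).sum + instSize σ E := by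
  conv_rhs => rw [← List.map_fst_zip h.le]
  simp [instSize, Function.comp_def]

theorem setOf_mem_cons (e : Trm × Trm) (E : List (Trm × Trm)) :
    {d | d ∈ e :: E} = insert e {d | d ∈ E} := by
  ext
  simp

theorem HasTidyInstance.of_bind {σ : ℕ → Trm} {X : ℕ} {t : Trm} {E : List (Trm × Trm)} {Q : Query}
    (hX : ¬ Occurs X t) (h : TidyQ (Query.subst (single X t) (eqQuery E ++ Q)))
    (hσX : σ X = subst σ t) (hσE : Solves σ {e | e ∈ E})
    (ih : ∀ E' Q', instSize σ E' = instSize σ E → TidyQ (eqQuery E' ++ Q') →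
      Solves σ {e | e ∈ E'} → HasTidyInstance {e | e ∈ E'} Q') :
    HasTidyInstance (insert (.var X, t) {e | e ∈ E}) Q := by
  let E' := E.map (Prod.map (subst (single X t)) (subst (single X t)))
  have hE' : {e | e ∈ E'} = Prod.map (subst (single X t)) (subst (single X t)) '' {e | e ∈ E} := by
    ext
    simp [E']
  have hσE' : Solves σ {e | e ∈ E'} := by
    rwa [hE', solves_image_subst, comp_single hσX]
  have htidy := ih E' _ (instSize_map_single hσX E) (subst_eqQuery_append (single X t) E Q ▸ h) hσE'
  exact .bind hX (hE' ▸ htidy)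

theorem HasTidyInstance.of_tidyQ {σ : ℕ → Trm} {E : List (Trm × Trm)} {Q : Query}
    (h : TidyQ (eqQuery E ++ Q)) (hσ : Solves σ {e | e ∈ E}) :
    HasTidyInstance {e | e ∈ E} Q := by
  induction hn : instSize σ E using Nat.strong_induction_on generalizing E Q with
  | _ n ih =>
  match E with
  | [] => exact ⟨var, by simpa using isIdempotentMgu_empty, by rwa [Query.subst_var]⟩
  | e :: E =>
    rw [eqQuery_cons, List.cons_append] at h
    rw [setOf_mem_cons] at hσ ⊢
    obtain ⟨he, hσE⟩ := solves_insert.1 hσ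
    have hsize : instSize σ (e :: E) = size (subst σ e.1) + instSize σ E := by simp [instSize]
    have hpos := size_pos (subst σ e.1)
    have ih_tail (E' : List (Trm × Trm)) (Q' : Query) (hE' : instSize σ E' = instSize σ E)
        (h' : TidyQ (eqQuery E' ++ Q')) (hσ' : Solves σ {e | e ∈ E'}) :
        HasTidyInstance {e | e ∈ E'} Q' := ih _ (by omega) h' hσ' rfl
    match e with
    | (.var X, t) =>
      have hX : ¬ Occurs X t := by
        simpa [varsL] using h.not_mem_out_of_mem_inp (x := X) List.mem_cons_self (by simp [varsL])
      exact .of_bind hX h.bind_inp (by simpa using he) hσE ih_tail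
    | (.fn f ss, .var X) =>
      have hX : ¬ Occurs X (.fn f ss) := fun hX =>
        h.not_mem_out_of_mem_inp (x := X) List.mem_cons_self (by simpa [varsL] using hX)
          (by simp [varsL])
      refine (of_bind hX h.bind_out (by simpa using he.symm) hσE ih_tail).congr fun _ => ?_
      rw [solves_insert, solves_insert, eq_comm]
    | (.fn f ss, .fn g ts) =>
      simp only [subst_fn, fn.injEq] at he
      obtain ⟨rfl, hst⟩ := he
      have hlen : ss.length = ts.length := by simpa using congrArg List.length hst
      have hzip : {d | d ∈ ss.zip ts ++ E} = zipEqs ss ts ∪ {d | d ∈ E} := by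
        ext
        simp [zipEqs]
      have hdec : instSize σ (ss.zip ts ++ E) < n := by
        rw [instSize_zip_append hlen, ← hn, hsize]
        simp [Function.comp_def]
      have htidy : TidyQ (eqQuery (ss.zip ts ++ E) ++ Q) := by
        simpa using h.decompose hlen
      have hdecomposed := ih _ hdec htidy (hzip ▸ (solves_insert_fn hlen).1 hσ) rfl
      exact (hzip ▸ hdecomposed).congr fun _ => (solves_insert_fn hlen).symm

/-! ### Resolution -/

theorem TidyQ.exists_interpolating_ranking {Q B : Query} {A : Atom} {V : Set ℕ} (hQ : TidyQ Q)
    (hB : TidyQ B) (hA : A ∈ Q) (hBV : queryVars B ⊆ V) (hdisj : Disjoint (queryVars Q) V) :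
    ∃ r : ℕ → ℕ ×ₗ ℕ, IsRanking r Q ∧ IsRanking r B ∧
      (∀ x ∈ varsL A.inp, ∀ v ∈ V, r x < r v) ∧ ∀ v ∈ V, ∀ y ∈ varsL A.out, r v < r y := by
  classical
  obtain ⟨q, hq⟩ := hQ.exists_separating_ranking
  obtain ⟨b, hb⟩ := hB.exists_isRanking
  obtain ⟨m, hinp, hout⟩ := hq A hA
  let r (x : ℕ) : ℕ ×ₗ ℕ := if x ∈ V then toLex (m, b x + 1) else toLex (q x, 0)
  have r_of_mem {x : ℕ} (hx : x ∈ V) : r x = toLex (m, b x + 1) := if_pos hx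
  have r_inp {D : Atom} {x : ℕ} (hD : D ∈ Q) (hx : x ∈ varsL D.inp) : r x = toLex (q x, 0) :=
    if_neg (hdisj.notMem_of_mem_left (vars_subset_queryVars hD (D.inp_subset_vars hx)))
  have r_out {D : Atom} {x : ℕ} (hD : D ∈ Q) (hx : x ∈ varsL D.out) : r x = toLex (q x, 0) :=
    if_neg (hdisj.notMem_of_mem_left (vars_subset_queryVars hD (D.out_subset_vars hx)))
  refine ⟨r, fun D hD x hx y hy => ?_, fun D hD x hx y hy => ?_, fun x hx v hv => ?_,
    fun v hv y hy => ?_⟩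
  · obtain ⟨k, hxk, hky⟩ := hq D hD
    rw [r_inp hD hx, r_out hD hy, Prod.Lex.toLex_lt_toLex]
    exact .inl ((hxk x hx).trans_lt (hky y hy))
  · have hxV := hBV (vars_subset_queryVars hD (D.inp_subset_vars hx))
    have hyV := hBV (vars_subset_queryVars hD (D.out_subset_vars hy))
    rw [r_of_mem hxV, r_of_mem hyV, Prod.Lex.toLex_lt_toLex]
    exact .inr ⟨rfl, Nat.succ_lt_succ (hb D hD x hx y hy)⟩
  · rw [r_inp hA hx, r_of_mem hv, Prod.Lex.toLex_lt_toLex]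
    exact (hinp x hx).lt_or_eq.imp_right fun hxm => ⟨hxm, Nat.succ_pos _⟩
  · rw [r_of_mem hv, r_out hA hy, Prod.Lex.toLex_lt_toLex]
    exact .inl (hout y hy)

theorem TidyC.linearTuple_inp_append_outs {C : Clause} (hC : TidyC C) :
    LinearTuple (C.head.inp ++ outs C.body) := by
  refine LinearTuple.append hC.2.1 hC.1.linearTuple_outs (Set.disjoint_left.2 fun x hx hx' => ?_)
  obtain ⟨A, hA, hxA⟩ := mem_varsL_outs.1 hx'
  exact hC.2.2 x hx A hA hxA

theorem varsL_inp_append_outs_subset_clauseVars (C : Clause) :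
    varsL (C.head.inp ++ outs C.body) ⊆ clauseVars C := by
  rw [varsL_append]
  exact Set.union_subset_union C.head.inp_subset_vars (varsL_outs_subset_queryVars C.body)

/-- The equations of the selected atom `A` and the head `H`, oriented so that the tuple of their
right-hand sides is linear for tidy queries and clauses. -/
def orientedEqs (A H : Atom) : List (Trm × Trm) := A.inp.zip H.inp ++ H.out.zip A.out

theorem solves_orientedEqs {σ : ℕ → Trm} {A H : Atom} (hinp : A.inp.length = H.inp.length)
    (hout : A.out.length = H.out.length) :
    Solves σ {e | e ∈ orientedEqs A H} ↔ Solves σ (atomEqs A H) := by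
  have horiented : {e | e ∈ orientedEqs A H} = zipEqs A.inp H.inp ∪ zipEqs H.out A.out := by
    ext; simp [orientedEqs, zipEqs]
  have hatom : atomEqs A H = zipEqs A.inp H.inp ∪ zipEqs A.out H.out := by
    ext; simp [atomEqs, zipEqs, List.zip_append hinp]
  rw [horiented, hatom, solves_union, solves_union, solves_zipEqs hout, solves_zipEqs hout.symm,
    eq_comm (a := H.out.map _)]

theorem TidyQ.orientedEqs_append {P S : Query} {A : Atom} {C : Clause}
    (hQ : TidyQ (P ++ A :: S)) (hC : TidyC C)
    (hdisj : Disjoint (queryVars (P ++ A :: S)) (clauseVars C))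
    (hinp : A.inp.length = C.head.inp.length) (hout : A.out.length = C.head.out.length) :
    TidyQ (eqQuery (orientedEqs A C.head) ++ (P ++ C.body ++ S)) := by
  obtain ⟨r, hrQ, hrB, hr_inp, hr_out⟩ :=
    hQ.exists_interpolating_ranking (A := A) hC.1 (by simp) Set.subset_union_right hdisj
  have hhead : C.head.vars ⊆ clauseVars C := Set.subset_union_left
  obtain ⟨hrP, hrAS⟩ := isRanking_append.1 hrQ
  refine .of_isRanking (r := r) (fun x => ?_) ?_
  · have hlin : LinearTuple (outs (P ++ A :: S) ++ (C.head.inp ++ outs C.body)) :=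
      hQ.linearTuple_outs.append hC.linearTuple_inp_append_outs
        (hdisj.mono (varsL_outs_subset_queryVars _) (varsL_inp_append_outs_subset_clauseVars C))
    have := hlin x
    simp only [orientedEqs, eqQuery_append, outs_append, outs_cons, outs_eqQuery_zip hinp,
      outs_eqQuery_zip hout.symm, countL_append] at this ⊢
    omega
  · simp only [orientedEqs, eqQuery_append, isRanking_append]
    refine ⟨⟨isRanking_eqQuery_zip fun x hx y hy => ?_, isRanking_eqQuery_zip fun x hx y hy => ?_⟩,
      ⟨hrP, hrB⟩, (isRanking_cons.1 hrAS).2⟩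
    · exact hr_inp x hx y (hhead (C.head.inp_subset_vars hy))
    · exact hr_out x (hhead (C.head.out_subset_vars hx)) y hy

/-- Let `Q` be a tidy query and `C = H ← B` a tidy clause that is variable
disjoint from `Q`.  Then every SLD-resolvent of `Q` and `C` (with respect to
any selected atom of `Q`) is a tidy query. -/
theorem stmt12 (Q : Query) (C : Clause)
    (hQ : TidyQ Q) (hC : TidyC C)
    (hdisj : queryVars Q ∩ clauseVars C = ∅)
    (i : ℕ) (hi : i < Q.length)
    (hpred : (Q.get ⟨i, hi⟩).pred = C.head.pred)
    (hlen_in : (Q.get ⟨i, hi⟩).inp.length = C.head.inp.length)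
    (hlen_out : (Q.get ⟨i, hi⟩).out.length = C.head.out.length)
    (θ : ℕ → Trm) (hθ : IsMgu θ (atomEqs (Q.get ⟨i, hi⟩) C.head)) :
    TidyQ (Resolvent Q i C θ) := by
  have hsplit : Q = Q.take i ++ Q.get ⟨i, hi⟩ :: Q.drop (i + 1) := by simp
  have horiented :
      TidyQ (eqQuery (orientedEqs (Q.get ⟨i, hi⟩) C.head) ++
        (Q.take i ++ C.body ++ Q.drop (i + 1))) :=
    TidyQ.orientedEqs_append (hsplit ▸ hQ) hC
      (hsplit ▸ Set.disjoint_iff_inter_eq_empty.2 hdisj) hlen_in hlen_out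
  have hsolves (σ : ℕ → Trm) := solves_orientedEqs (σ := σ) hlen_in hlen_out
  exact ((HasTidyInstance.of_tidyQ horiented ((hsolves θ).2 hθ.1)).congr hsolves).tidyQ_of_isMgu
    hθ
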